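/- arXiv:2409.12366 — 3 statements merged into one kernel-verified Lean document; each statement's English description precedes it below -/
import Mathlib

section
/- Let E be a real inner product space, Γ > 0, 0 < c₁ < c₂ < 1, and γ ∈ (0, 1]. For each k ∈ ℕ let J_k : E → ℝ be differentiable with ∇J_k Lipschitz continuous with constant Γ and J_k(x) ≥ 0 for all x. Let θ^k ∈ E, p^k ∈ E with p^k ≠ 0, and α^k > 0 be sequences with θ^{k+1} = θ^k + α^k p^k such that for every k: (i) J_k(θ^{k+1}) ≤ J_k(θ^k) + c₁ α^k ⟨∇J_k(θ^k), p^k⟩ and ⟨∇J_k(θ^{k+1}), p^k⟩ ≥ c₂ ⟨∇J_k(θ^k), p^k⟩ (the Wolfe conditions); (ii) J_{k+1}(θ^{k+1}) ≤ J_k(θ^{k+1}); and (iii) ⟨∇J_k(θ^k), p^k⟩ ≤ −γ ‖∇J_k(θ^k)‖ ‖p^k‖. Then ‖∇J_k(θ^k)‖ → 0 as k → ∞. -/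
open RealInnerProductSpace

/-!
This is Zoutendijk's argument. The curvature condition together with the Lipschitz gradient bounds
the step length from below by `α k ≥ (1 - c₂) (-⟪g k (θ k), p k⟫) / (Γ ‖p k‖²)`. Inserting this in
the sufficient decrease condition and using the angle condition shows that one step lowers the cost
by at least a fixed multiple of `‖g k (θ k)‖²` (`step_decrease`). Since
the cost may only drop further when `J k` is replaced by `J (k + 1)`, the sequence `J k (θ k)` is
antitone; it is bounded below by `0`, hence converges, so its successive differences, and with them
the squared gradient norms, tend to `0` (`tendsto_zero_of_sq_le_decrement`).
-/

/-- The step length bound multiplied by the slope `-⟪u, p⟫`, where `u` and `v` are the gradients at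
the two ends of the step. -/
theorem step_decrease {E : Type*} [NormedAddCommGroup E] [InnerProductSpace ℝ E]
    {Γ c₂ γ a : ℝ} (hc₂ : c₂ < 1) (hγ : 0 < γ) {u v p : E} (hp : p ≠ 0) (ha : 0 < a)
    (hlip : ‖v - u‖ ≤ Γ * ‖a • p‖) (hcurv : c₂ * ⟪u, p⟫ ≤ ⟪v, p⟫)
    (hangle : ⟪u, p⟫ ≤ -γ * ‖u‖ * ‖p‖) :
    (1 - c₂) * γ ^ 2 * ‖u‖ ^ 2 ≤ Γ * (a * -⟪u, p⟫) := by
  have hP : 0 < ‖p‖ := norm_pos_iff.mpr hp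
  have hcs : ⟪v - u, p⟫ ≤ ‖v - u‖ * ‖p‖ := real_inner_le_norm _ _
  rw [inner_sub_left] at hcs
  rw [norm_smul, Real.norm_of_nonneg ha.le] at hlip
  have hslope : (1 - c₂) * -⟪u, p⟫ ≤ Γ * a * ‖p‖ ^ 2 := by
    nlinarith [mul_le_mul_of_nonneg_right hlip hP.le]
  have hGP : 0 ≤ γ * ‖u‖ * ‖p‖ := by positivity
  have ht : γ * ‖u‖ * ‖p‖ ≤ -⟪u, p⟫ := by linarith
  have hsq : (γ * ‖u‖ * ‖p‖) ^ 2 ≤ (-⟪u, p⟫) ^ 2 := pow_le_pow_left₀ hGP ht 2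
  refine le_of_mul_le_mul_right ?_ (pow_pos hP 2)
  calc (1 - c₂) * γ ^ 2 * ‖u‖ ^ 2 * ‖p‖ ^ 2
      = (1 - c₂) * (γ * ‖u‖ * ‖p‖) ^ 2 := by ring
    _ ≤ (1 - c₂) * (-⟪u, p⟫) ^ 2 := mul_le_mul_of_nonneg_left hsq (by linarith)
    _ = (1 - c₂) * -⟪u, p⟫ * -⟪u, p⟫ := by ring
    _ ≤ Γ * a * ‖p‖ ^ 2 * -⟪u, p⟫ := mul_le_mul_of_nonneg_right hslope (hGP.trans ht)
    _ = Γ * (a * -⟪u, p⟫) * ‖p‖ ^ 2 := by ring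

/-- A nonnegative sequence whose decrements dominate a fixed positive multiple of `b k ^ 2` forces
`b` to tend to zero. -/
theorem tendsto_zero_of_sq_le_decrement {f b : ℕ → ℝ} {C : ℝ} (hC : 0 < C) (hf : ∀ k, 0 ≤ f k)
    (hb : ∀ k, 0 ≤ b k) (h : ∀ k, C * b k ^ 2 ≤ f k - f (k + 1)) :
    Filter.Tendsto b Filter.atTop (nhds 0) := by
  have hanti : Antitone f := antitone_nat_of_succ_le fun k => by
    have : 0 ≤ C * b k ^ 2 := by positivity
    linarith [h k]
  have hlim := tendsto_atTop_ciInf hanti ⟨0, by rintro _ ⟨k, rfl⟩; exact hf k⟩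
  have hdiff : Filter.Tendsto (fun k => (f k - f (k + 1)) / C) Filter.atTop (nhds 0) := by
    simpa using (hlim.sub (hlim.comp (Filter.tendsto_add_atTop_nat 1))).div_const C
  have hsq : Filter.Tendsto (fun k => b k ^ 2) Filter.atTop (nhds 0) :=
    squeeze_zero (fun k => sq_nonneg _)
      (fun k => (le_div_iff₀ hC).mpr (by linarith [h k])) hdiff
  simpa [Real.sqrt_sq (hb _)] using hsq.sqrt

/-- Convergence of the real-time bilevel iteration (paper's Lemma 2): under the Wolfe
conditions, inter-step cost monotonicity, a uniform angle condition, Lipschitz gradients and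
nonnegative costs, the gradient norms tend to zero. -/
theorem stmt_5 {E : Type*} [NormedAddCommGroup E] [InnerProductSpace ℝ E] [CompleteSpace E]
    (Γ c₁ c₂ γ : ℝ) (hΓ : 0 < Γ) (hc₁ : 0 < c₁) (h₁₂ : c₁ < c₂) (hc₂ : c₂ < 1)
    (hγ : γ ∈ Set.Ioc (0 : ℝ) 1)
    (J : ℕ → E → ℝ) (g : ℕ → E → E)
    (hgrad : ∀ k x, HasGradientAt (J k) (g k x) x)
    (hlip : ∀ k x y, ‖g k x - g k y‖ ≤ Γ * ‖x - y‖)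
    (hnonneg : ∀ k x, 0 ≤ J k x)
    (θ p : ℕ → E) (α : ℕ → ℝ)
    (hp : ∀ k, p k ≠ 0) (hα : ∀ k, 0 < α k)
    (hstep : ∀ k, θ (k + 1) = θ k + α k • p k)
    (hW1 : ∀ k, J k (θ (k + 1)) ≤ J k (θ k) + c₁ * α k * ⟪g k (θ k), p k⟫)
    (hW2 : ∀ k, ⟪g k (θ (k + 1)), p k⟫ ≥ c₂ * ⟪g k (θ k), p k⟫)
    (hmono : ∀ k, J (k + 1) (θ (k + 1)) ≤ J k (θ (k + 1)))
    (hangle : ∀ k, ⟪g k (θ k), p k⟫ ≤ -γ * ‖g k (θ k)‖ * ‖p k‖) :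
    Filter.Tendsto (fun k => ‖g k (θ k)‖) Filter.atTop (nhds 0) := by
  have hC : 0 < c₁ * ((1 - c₂) * γ ^ 2) / Γ := by
    have h₁ : 0 < 1 - c₂ := by linarith
    have h₂ : 0 < γ := hγ.1
    positivity
  refine tendsto_zero_of_sq_le_decrement (f := fun k => J k (θ k)) hC
    (fun k => hnonneg k _) (fun k => norm_nonneg _) fun k => ?_
  have hL : ‖g k (θ (k + 1)) - g k (θ k)‖ ≤ Γ * ‖α k • p k‖ := by
    simpa [hstep k] using hlip k (θ (k + 1)) (θ k)
  have hdec := step_decrease hc₂ hγ.1 (hp k) (hα k) hL (hW2 k) (hangle k)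
  have hdec' : c₁ * ((1 - c₂) * γ ^ 2) / Γ * ‖g k (θ k)‖ ^ 2
      ≤ c₁ * (α k * -⟪g k (θ k), p k⟫) := by
    rw [div_mul_eq_mul_div, div_le_iff₀ hΓ]
    nlinarith [mul_le_mul_of_nonneg_left hdec hc₁.le]
  linarith [hW1 k, hmono k]
end

section
/- Let E be a real inner product space, Γ > 0, and 0 < c₁ < c₂ < 1. For each k ∈ ℕ let J_k : E → ℝ be differentiable with ∇J_k Lipschitz continuous with constant Γ and J_k(x) ≥ 0 for all x. Let θ^k ∈ E, p^k ∈ E with p^k ≠ 0, and α^k > 0 be sequences with θ^{k+1} = θ^k + α^k p^k such that for every k: (i) J_k(θ^{k+1}) ≤ J_k(θ^k) + c₁ α^k ⟨∇J_k(θ^k), p^k⟩ and ⟨∇J_k(θ^{k+1}), p^k⟩ ≥ c₂ ⟨∇J_k(θ^k), p^k⟩; (ii) J_{k+1}(θ^{k+1}) ≤ J_k(θ^{k+1}); and (iii) ⟨∇J_k(θ^k), p^k⟩ < 0. Then the series Σ_{k=0}^∞ ⟨∇J_k(θ^k), p^k⟩² / ‖p^k‖² converges (is finite). -/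
/-!
Write `s = ⟪∇J_k(θ^k), p^k⟫ < 0`. The curvature condition and Cauchy-Schwarz with the Lipschitz
bound give `(1 - c₂) (-s) ≤ Γ α ‖p‖²`, a lower bound on the step length. Inserting it into the
sufficient decrease condition yields `s² / ‖p‖² ≤ C (J_k(θ^k) - J_k(θ^{k+1}))` with
`C = Γ / (c₁ (1 - c₂))`. Since `J_{k+1}(θ^{k+1}) ≤ J_k(θ^{k+1})`, these bounds telescope, and
nonnegativity of the costs bounds every partial sum by `C J_0(θ^0)`.
-/

open RealInnerProductSpace

/-- Zoutendijk-type summability condition from the proof of the paper's Lemma 2. -/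
theorem stmt_6 {E : Type*} [NormedAddCommGroup E] [InnerProductSpace ℝ E] [CompleteSpace E]
    (Γ c₁ c₂ : ℝ) (hΓ : 0 < Γ) (hc₁ : 0 < c₁) (h₁₂ : c₁ < c₂) (hc₂ : c₂ < 1)
    (J : ℕ → E → ℝ) (g : ℕ → E → E)
    (hgrad : ∀ k x, HasGradientAt (J k) (g k x) x)
    (hlip : ∀ k x y, ‖g k x - g k y‖ ≤ Γ * ‖x - y‖)
    (hnonneg : ∀ k x, 0 ≤ J k x)
    (θ p : ℕ → E) (α : ℕ → ℝ)
    (hp : ∀ k, p k ≠ 0) (hα : ∀ k, 0 < α k)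
    (hstep : ∀ k, θ (k + 1) = θ k + α k • p k)
    (hW1 : ∀ k, J k (θ (k + 1)) ≤ J k (θ k) + c₁ * α k * ⟪g k (θ k), p k⟫)
    (hW2 : ∀ k, ⟪g k (θ (k + 1)), p k⟫ ≥ c₂ * ⟪g k (θ k), p k⟫)
    (hmono : ∀ k, J (k + 1) (θ (k + 1)) ≤ J k (θ (k + 1)))
    (hdesc : ∀ k, ⟪g k (θ k), p k⟫ < 0) :
    Summable (fun k => ⟪g k (θ k), p k⟫ ^ 2 / ‖p k‖ ^ 2) := by
  have hC : 0 < c₁ * (1 - c₂) := mul_pos hc₁ (by linarith)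
  have key : ∀ k, ⟪g k (θ k), p k⟫ ^ 2 / ‖p k‖ ^ 2 ≤
      Γ / (c₁ * (1 - c₂)) * (J k (θ k) - J (k + 1) (θ (k + 1))) := by
    intro k
    have hN : 0 < ‖p k‖ ^ 2 := by have := norm_pos_iff.mpr (hp k); positivity
    have hcurv : (1 - c₂) * -⟪g k (θ k), p k⟫ ≤ Γ * α k * ‖p k‖ ^ 2 := by
      have hl : ‖g k (θ (k + 1)) - g k (θ k)‖ ≤ Γ * (α k * ‖p k‖) := by
        have h := hlip k (θ (k + 1)) (θ k)
        rwa [hstep k, add_sub_cancel_left, norm_smul, Real.norm_of_nonneg (hα k).le,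
          ← hstep k] at h
      calc (1 - c₂) * -⟪g k (θ k), p k⟫
          ≤ ⟪g k (θ (k + 1)) - g k (θ k), p k⟫ := by
            rw [inner_sub_left]; linarith [hW2 k]
        _ ≤ ‖g k (θ (k + 1)) - g k (θ k)‖ * ‖p k‖ := real_inner_le_norm _ _
        _ ≤ Γ * (α k * ‖p k‖) * ‖p k‖ := by gcongr
        _ = Γ * α k * ‖p k‖ ^ 2 := by ring
    have hdec : c₁ * α k * -⟪g k (θ k), p k⟫ ≤ J k (θ k) - J (k + 1) (θ (k + 1)) := by
      linarith [hW1 k, hmono k]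
    rw [div_mul_eq_mul_div, div_le_div_iff₀ hN hC]
    -- Scale the curvature bound by `c₁ (-s) > 0` and the decrease bound by `Γ ‖p‖² > 0`.
    have h1 := mul_le_mul_of_nonneg_left hcurv
      (mul_pos hc₁ (neg_pos.mpr (hdesc k))).le
    have h2 := mul_le_mul_of_nonneg_left hdec (mul_pos hΓ hN).le
    linarith
  refine summable_of_sum_range_le (c := Γ / (c₁ * (1 - c₂)) * J 0 (θ 0))
    (fun k => by positivity) (fun n => ?_)
  calc ∑ k ∈ Finset.range n, ⟪g k (θ k), p k⟫ ^ 2 / ‖p k‖ ^ 2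
      ≤ ∑ k ∈ Finset.range n,
          Γ / (c₁ * (1 - c₂)) * (J k (θ k) - J (k + 1) (θ (k + 1))) :=
        Finset.sum_le_sum fun k _ => key k
    _ = Γ / (c₁ * (1 - c₂)) * (J 0 (θ 0) - J n (θ n)) := by
        rw [← Finset.mul_sum, Finset.sum_range_sub' (fun k => J k (θ k))]
    _ ≤ Γ / (c₁ * (1 - c₂)) * J 0 (θ 0) :=
        mul_le_mul_of_nonneg_left (by linarith [hnonneg n (θ n)]) (div_pos hΓ hC).le
end

section
/- Let E be a real inner product space, let U ⊆ E be a nonempty open convex set, let Γ > 0, 0 < c₁ < c₂ < 1, γ ∈ (0, 1], and M ∈ ℝ. For each k ∈ ℕ let H_k : U → ℝ be differentiable with ∇H_k Lipschitz continuous on U with constant Γ and H_k(x) ≥ M for all x ∈ U. Let θ^k ∈ U, p^k ∈ E with p^k ≠ 0, and α^k > 0 be sequences with θ^{k+1} = θ^k + α^k p^k ∈ U for all k, such that for every k: (i) H_k(θ^{k+1}) ≤ H_k(θ^k) + c₁ α^k ⟨∇H_k(θ^k), p^k⟩ and ⟨∇H_k(θ^{k+1}), p^k⟩ ≥ c₂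 ⟨∇H_k(θ^k), p^k⟩; (ii) H_{k+1}(θ^{k+1}) ≤ H_k(θ^{k+1}); and (iii) ⟨∇H_k(θ^k), p^k⟩ ≤ −γ ‖∇H_k(θ^k)‖ ‖p^k‖. Then ‖∇H_k(θ^k)‖ → 0 as k → ∞. -/
/-!
The Zoutendijk argument. The curvature condition and the Lipschitz bound on the gradient force the
step length to be at least a multiple of `-⟪g, p⟫ / ‖p‖ ^ 2`; inserted in the sufficient decrease
condition, with the angle condition, this gives `κ * ‖g k (θ k)‖ ^ 2 ≤ H k (θ k) - H k (θ (k + 1))`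
for a fixed `κ > 0` (`wolfe_decrease`). Since the cost does not increase between time steps, the
values `H k (θ k)` form an antitone sequence bounded below by `M`, so their consecutive differences
tend to zero, and with them the squared gradient norms.
-/

open RealInnerProductSpace

/-- One Wolfe step of length `a` along `p`, where `u` and `v` are the gradients before and after the
step: the decrease guaranteed by the sufficient decrease condition dominates `‖u‖ ^ 2`. -/
lemma wolfe_decrease {E : Type*} [NormedAddCommGroup E] [InnerProductSpace ℝ E]
    {Γ c₁ c₂ γ a : ℝ} {u v p : E} (hΓ : 0 < Γ) (hc₁ : 0 < c₁) (hc₂ : c₂ < 1) (hγ : 0 < γ)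
    (hp : p ≠ 0) (hlip : ‖v - u‖ ≤ Γ * (a * ‖p‖))
    (hcurv : ⟪v, p⟫ ≥ c₂ * ⟪u, p⟫) (hangle : ⟪u, p⟫ ≤ -γ * ‖u‖ * ‖p‖) :
    c₁ * (1 - c₂) * γ ^ 2 / Γ * ‖u‖ ^ 2 ≤ -(c₁ * a * ⟪u, p⟫) := by
  have hP : 0 < ‖p‖ := norm_pos_iff.mpr hp
  have hcs : (1 - c₂) * -⟪u, p⟫ ≤ Γ * a * ‖p‖ ^ 2 := by
    have h1 : ⟪v - u, p⟫ ≤ ‖v - u‖ * ‖p‖ := real_inner_le_norm _ _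
    have h2 : ‖v - u‖ * ‖p‖ ≤ Γ * (a * ‖p‖) * ‖p‖ := by gcongr
    rw [inner_sub_left] at h1
    linarith
  -- Multiply the lower bound on `a` by `-⟪u, p⟫`, bound `⟪u, p⟫ ^ 2` from below by the angle
  -- condition, and cancel `‖p‖ ^ 2`.
  generalize ⟪u, p⟫ = s at *
  have hs : γ * ‖u‖ * ‖p‖ ≤ -s := by linarith
  have hs0 : 0 ≤ γ * ‖u‖ * ‖p‖ := by positivity
  have hsq : (γ * ‖u‖ * ‖p‖) ^ 2 ≤ (-s) ^ 2 := by gcongr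
  have hmul : (1 - c₂) * -s * -s ≤ Γ * a * ‖p‖ ^ 2 * -s :=
    mul_le_mul_of_nonneg_right hcs (by linarith)
  have hmul' : (1 - c₂) * (γ * ‖u‖ * ‖p‖) ^ 2 ≤ (1 - c₂) * (-s) ^ 2 :=
    mul_le_mul_of_nonneg_left hsq (by linarith)
  have key : (1 - c₂) * γ ^ 2 * ‖u‖ ^ 2 ≤ Γ * a * -s := by
    refine le_of_mul_le_mul_right ?_ (pow_pos hP 2)
    linarith
  rw [div_mul_eq_mul_div, div_le_iff₀ hΓ]
  have := mul_le_mul_of_nonneg_left key hc₁.le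
  linarith

/-- Convergence of the bilevel iteration with high-level constraints (paper's Proposition 2):
on an open convex strictly feasible set `U`, with barrier-augmented costs `H k` bounded below,
Lipschitz gradients, the Wolfe conditions, inter-step monotonicity, and a uniform angle
condition, the gradient norms tend to zero. -/
theorem stmt_14 {E : Type*} [NormedAddCommGroup E] [InnerProductSpace ℝ E] [CompleteSpace E]
    (U : Set E) (hUne : U.Nonempty) (hUo : IsOpen U) (hUc : Convex ℝ U)
    (Γ c₁ c₂ γ M : ℝ) (hΓ : 0 < Γ) (hc₁ : 0 < c₁) (h₁₂ : c₁ < c₂) (hc₂ : c₂ < 1)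
    (hγ : γ ∈ Set.Ioc (0 : ℝ) 1)
    (H : ℕ → E → ℝ) (g : ℕ → E → E)
    (hgrad : ∀ k, ∀ x ∈ U, HasGradientAt (H k) (g k x) x)
    (hlip : ∀ k, ∀ x ∈ U, ∀ y ∈ U, ‖g k x - g k y‖ ≤ Γ * ‖x - y‖)
    (hbdd : ∀ k, ∀ x ∈ U, M ≤ H k x)
    (θ p : ℕ → E) (α : ℕ → ℝ)
    (hθU : ∀ k, θ k ∈ U)
    (hp : ∀ k, p k ≠ 0) (hα : ∀ k, 0 < α k)
    (hstep : ∀ k, θ (k + 1) = θ k + α k • p k)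
    (hW1 : ∀ k, H k (θ (k + 1)) ≤ H k (θ k) + c₁ * α k * ⟪g k (θ k), p k⟫)
    (hW2 : ∀ k, ⟪g k (θ (k + 1)), p k⟫ ≥ c₂ * ⟪g k (θ k), p k⟫)
    (hmono : ∀ k, H (k + 1) (θ (k + 1)) ≤ H k (θ (k + 1)))
    (hangle : ∀ k, ⟪g k (θ k), p k⟫ ≤ -γ * ‖g k (θ k)‖ * ‖p k‖) :
    Filter.Tendsto (fun k => ‖g k (θ k)‖) Filter.atTop (nhds 0) := by
  set a : ℕ → ℝ := fun k => H k (θ k) with ha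
  set κ : ℝ := c₁ * (1 - c₂) * γ ^ 2 / Γ with hκdef
  have hκ : 0 < κ := by
    have := sub_pos.mpr hc₂
    have := hγ.1
    positivity
  have hdec : ∀ k, κ * ‖g k (θ k)‖ ^ 2 ≤ a k - a (k + 1) := by
    intro k
    have hl : ‖g k (θ (k + 1)) - g k (θ k)‖ ≤ Γ * (α k * ‖p k‖) := by
      have h := hlip k _ (hθU (k + 1)) _ (hθU k)
      have hd : θ (k + 1) - θ k = α k • p k := by rw [hstep k, add_sub_cancel_left]
      rwa [hd, norm_smul, Real.norm_of_nonneg (hα k).le] at h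
    have h := wolfe_decrease hΓ hc₁ hc₂ hγ.1 (hp k) hl (hW2 k) (hangle k)
    have h1 := hW1 k
    have h2 := hmono k
    simp only [ha]
    linarith
  have hanti : Antitone a := antitone_nat_of_succ_le fun k => by
    have := hdec k
    have : 0 ≤ κ * ‖g k (θ k)‖ ^ 2 := by positivity
    linarith
  have hlim := tendsto_atTop_ciInf hanti
    ⟨M, by rintro _ ⟨k, rfl⟩; exact hbdd k _ (hθU k)⟩
  have hdiff : Filter.Tendsto (fun k => (a k - a (k + 1)) / κ) Filter.atTop (nhds 0) := by
    simpa using (hlim.sub (hlim.comp (Filter.tendsto_add_atTop_nat 1))).div_const κ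
  have hsq : Filter.Tendsto (fun k => ‖g k (θ k)‖ ^ 2) Filter.atTop (nhds 0) :=
    squeeze_zero (fun k => by positivity)
      (fun k => by rw [le_div_iff₀ hκ]; linarith [hdec k]) hdiff
  simpa [Real.sqrt_sq] using hsq.sqrt
end
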